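/- Over the Gaussian integers ℤ[i], every positive semi-definite Hermitian matrix of the form [[1,0,a,b],[0,1,c,d],[ā,c̄,2,1],[b̄,d̄,1,2]] with a,b,c,d ∈ ℤ[i] defines a lattice isometric to one of ⟨1,1,1,0⟩, ⟨1,1,1,1⟩, or ⟨1,1⟩ ⊥ [[2,1],[1,2]]; consequently any positive definite Hermitian ℤ[i]-lattice representing both ⟨1,1⟩ and [[2,1],[1,2]] contains a sublattice isometric to ⟨1,1,1⟩ or to ⟨1,1⟩ ⊥ [[2,1],[1,2]]. -/

import Mathlib

open Complex Matrix
open scoped ComplexOrder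

/-- ω for ℚ(√-m): √-m if m ≡ 1,2 (mod 4), (1+√-m)/2 if m ≡ 3 (mod 4). -/
noncomputable def omg (m : ℕ) : ℂ :=
  if m % 4 = 3 then (1 + Real.sqrt m * Complex.I) / 2 else Real.sqrt m * Complex.I

/-- The Gaussian integers ℤ[i], as a subring of ℂ (m = 1). -/
noncomputable def ringO (m : ℕ) : Subalgebra ℤ ℂ := Algebra.adjoin ℤ {omg m}

/-- Representation of Hermitian ℤ[i]-lattices via Gram matrices. -/
def Represents {d k : ℕ} (M : Matrix (Fin d) (Fin d) ℂ) (B : Matrix (Fin k) (Fin k) ℂ) :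
    Prop :=
  ∃ X : Matrix (Fin k) (Fin d) ℂ, (∀ i j, X i j ∈ ringO 1) ∧ B = X * M * Xᴴ

/-- Isometry: mutual representation. -/
def Isometric' {d k : ℕ} (M : Matrix (Fin d) (Fin d) ℂ) (B : Matrix (Fin k) (Fin k) ℂ) :
    Prop :=
  Represents M B ∧ Represents B M

theorem gi_I : Complex.I ∈ ringO 1 := by
  have : omg 1 = Complex.I := by simp [omg]
  rw [ringO, this]
  exact Algebra.subset_adjoin rfl

theorem gi_mk (x y : ℤ) : (x : ℂ) + y * Complex.I ∈ ringO 1 :=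
  add_mem (intCast_mem _ x) (mul_mem (intCast_mem _ y) gi_I)

theorem gi_ex {z : ℂ} (hz : z ∈ ringO 1) : ∃ x y : ℤ, z = (x : ℂ) + y * Complex.I := by
  have h1 : omg 1 = Complex.I := by simp [omg]
  rw [ringO, h1] at hz
  induction hz using Algebra.adjoin_induction with
  | mem x hx => exact ⟨0, 1, by simpa using hx⟩
  | algebraMap r => exact ⟨r, 0, by simp⟩
  | add x y _ _ hx hy =>
    obtain ⟨a, b, rfl⟩ := hx
    obtain ⟨c, d, rfl⟩ := hy
    exact ⟨a + c, b + d, by push_cast; ring⟩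
  | mul x y _ _ hx hy =>
    obtain ⟨a, b, rfl⟩ := hx
    obtain ⟨c, d, rfl⟩ := hy
    refine ⟨a * c - b * d, a * d + b * c, ?_⟩
    push_cast
    linear_combination (b * d : ℂ) * Complex.I_mul_I

theorem gi_conj {z : ℂ} (hz : z ∈ ringO 1) : (starRingEnd ℂ) z ∈ ringO 1 := by
  obtain ⟨x, y, rfl⟩ := gi_ex hz
  have := gi_mk x (-y)
  simpa using this

theorem gi_matmul {l m n : ℕ} {X : Matrix (Fin l) (Fin m) ℂ} {Y : Matrix (Fin m) (Fin n) ℂ}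
    (hX : ∀ i j, X i j ∈ ringO 1) (hY : ∀ i j, Y i j ∈ ringO 1) :
    ∀ i j, (X * Y) i j ∈ ringO 1 := fun i j => by
  rw [Matrix.mul_apply]
  exact sum_mem fun k _ => mul_mem (hX _ _) (hY _ _)

theorem gi_ct {l m : ℕ} {X : Matrix (Fin l) (Fin m) ℂ}
    (hX : ∀ i j, X i j ∈ ringO 1) : ∀ i j, Xᴴ i j ∈ ringO 1 := fun i j => by
  rw [Matrix.conjTranspose_apply]
  exact gi_conj (hX _ _)

theorem rep_trans {l m n : ℕ} {A : Matrix (Fin l) (Fin l) ℂ} {B : Matrix (Fin m) (Fin m) ℂ}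
    {C : Matrix (Fin n) (Fin n) ℂ} (h1 : Represents A B) (h2 : Represents B C) :
    Represents A C := by
  obtain ⟨X, hX, rfl⟩ := h1
  obtain ⟨Y, hY, rfl⟩ := h2
  exact ⟨Y * X, gi_matmul hY hX, by simp only [Matrix.conjTranspose_mul, Matrix.mul_assoc]⟩

theorem iso_trans {l m n : ℕ} {A : Matrix (Fin l) (Fin l) ℂ} {B : Matrix (Fin m) (Fin m) ℂ}
    {C : Matrix (Fin n) (Fin n) ℂ} (h1 : Isometric' A B) (h2 : Isometric' B C) :
    Isometric' A C :=
  ⟨rep_trans h1.1 h2.1, rep_trans h2.2 h1.2⟩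

theorem iso_of {n : ℕ} {A B : Matrix (Fin n) (Fin n) ℂ} (X Y : Matrix (Fin n) (Fin n) ℂ)
    (hX : ∀ i j, X i j ∈ ringO 1) (hY : ∀ i j, Y i j ∈ ringO 1) (hYX : Y * X = 1)
    (h : B = X * A * Xᴴ) : Isometric' A B := by
  refine ⟨⟨X, hX, h⟩, Y, hY, ?_⟩
  have : Y * B * Yᴴ = (Y * X) * A * (Y * X)ᴴ := by
    rw [h]; simp only [Matrix.conjTranspose_mul, Matrix.mul_assoc]
  rw [this, hYX]; simp

/-- ⟨1,1⟩ ⊥ [[p,s],[s̄,q]] -/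
noncomputable def KM (p s q : ℂ) : Matrix (Fin 4) (Fin 4) ℂ :=
  !![1, 0, 0, 0; 0, 1, 0, 0; 0, 0, p, s; 0, 0, (starRingEnd ℂ) s, q]

/-- unipotent -/
noncomputable def UM (a b c d : ℂ) : Matrix (Fin 4) (Fin 4) ℂ :=
  !![1, 0, 0, 0; 0, 1, 0, 0; a, c, 1, 0; b, d, 0, 1]

theorem UM_gi {a b c d : ℂ} (ha : a ∈ ringO 1) (hb : b ∈ ringO 1) (hc : c ∈ ringO 1)
    (hd : d ∈ ringO 1) : ∀ i j, UM a b c d i j ∈ ringO 1 := by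
  intro i j
  fin_cases i <;> fin_cases j <;> simp [UM, ha, hb, hc, hd]

theorem schur_eq (a b c d : ℂ) :
    KM (2 - (starRingEnd ℂ) a * a - (starRingEnd ℂ) c * c)
      (1 - (starRingEnd ℂ) a * b - (starRingEnd ℂ) c * d)
      (2 - (starRingEnd ℂ) b * b - (starRingEnd ℂ) d * d) =
    UM (-(starRingEnd ℂ) a) (-(starRingEnd ℂ) b) (-(starRingEnd ℂ) c) (-(starRingEnd ℂ) d) *
     !![(1 : ℂ), 0, a, b; 0, 1, c, d;
          (starRingEnd ℂ) a, (starRingEnd ℂ) c, 2, 1;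
          (starRingEnd ℂ) b, (starRingEnd ℂ) d, 1, 2] *
    (UM (-(starRingEnd ℂ) a) (-(starRingEnd ℂ) b) (-(starRingEnd ℂ) c) (-(starRingEnd ℂ) d))ᴴ := by
  ext i j
  fin_cases i <;> fin_cases j <;>
    simp [KM, UM, Matrix.mul_apply, Fin.sum_univ_four] <;> ring

theorem UM_inv (a b c d : ℂ) : UM a b c d * UM (-a) (-b) (-c) (-d) = 1 := by
  ext i j
  fin_cases i <;> fin_cases j <;>
    simp [UM, Matrix.mul_apply, Fin.sum_univ_four]

theorem KM_swap (p s q : ℂ) : Isometric' (KM p s q) (KM q ((starRingEnd ℂ) s) p) := by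
  have hX : ∀ i j, (!![1, 0, 0, 0; 0, 1, 0, 0; 0, 0, 0, 1; 0, 0, 1, 0] :
      Matrix (Fin 4) (Fin 4) ℂ) i j ∈ ringO 1 := by
    intro i j
    fin_cases i <;> fin_cases j <;> simp
  refine iso_of _ _ hX hX ?_ ?_
  · ext i j
    fin_cases i <;> fin_cases j <;> simp [Matrix.mul_apply, Fin.sum_univ_four]
  · ext i j
    fin_cases i <;> fin_cases j <;> simp [KM, Matrix.mul_apply, Fin.sum_univ_four]

theorem KM_one {s : ℂ} (q : ℂ) (hs : s ∈ ringO 1) :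
    Isometric' (KM 1 s q) (KM 1 0 (q - (starRingEnd ℂ) s * s)) := by
  have hX : ∀ t ∈ ringO 1, ∀ i j, (!![1, 0, 0, 0; 0, 1, 0, 0; 0, 0, 1, 0; 0, 0, t, 1] :
      Matrix (Fin 4) (Fin 4) ℂ) i j ∈ ringO 1 := by
    intro t ht i j
    fin_cases i <;> fin_cases j <;> simp [ht]
  refine iso_of _ _ (hX _ (neg_mem (gi_conj hs))) (hX _ (gi_conj hs)) ?_ ?_
  · ext i j
    fin_cases i <;> fin_cases j <;> simp [Matrix.mul_apply, Fin.sum_univ_four]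
  · ext i j
    fin_cases i <;> fin_cases j <;> simp [KM, Matrix.mul_apply, Fin.sum_univ_four] <;> ring

theorem KM_diag0 : KM 1 0 0 = Matrix.diagonal ![(1 : ℂ), 1, 1, 0] := by
  ext i j
  fin_cases i <;> fin_cases j <;> simp [KM]

theorem KM_diag1 : KM 1 0 1 = 1 := by
  ext i j
  fin_cases i <;> fin_cases j <;> simp [KM]

/-- target alternatives -/
def Good (M : Matrix (Fin 4) (Fin 4) ℂ) : Prop :=
  Isometric' M (Matrix.diagonal ![(1 : ℂ), 1, 1, 0]) ∨
  Isometric' M (1 : Matrix (Fin 4) (Fin 4) ℂ) ∨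
  Isometric' M !![(1 : ℂ), 0, 0, 0; 0, 1, 0, 0; 0, 0, 2, 1; 0, 0, 1, 2]

theorem good_of {M N : Matrix (Fin 4) (Fin 4) ℂ} (h : Isometric' M N) (hN : Good N) : Good M :=
  hN.imp (iso_trans h) (Or.imp (iso_trans h) (iso_trans h))

theorem good_one (s1 s2 q : ℤ) (h0 : s1 ^ 2 + s2 ^ 2 ≤ q) (hq : q ≤ s1 ^ 2 + s2 ^ 2 + 1) :
    Good (KM 1 ((s1 : ℂ) + s2 * Complex.I) q) := by
  refine good_of (KM_one _ (gi_mk s1 s2)) ?_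
  have e : (q : ℂ) - (starRingEnd ℂ) ((s1 : ℂ) + s2 * Complex.I) * ((s1 : ℂ) + s2 * Complex.I)
      = ((q - (s1 ^ 2 + s2 ^ 2) : ℤ) : ℂ) := by
    simp
    linear_combination (-s2 ^ 2 : ℂ) * Complex.I_mul_I
  rw [e]
  have refl1 : ∀ A : Matrix (Fin 4) (Fin 4) ℂ, Isometric' A A := fun A =>
    iso_of 1 1 (fun i j => by fin_cases i <;> fin_cases j <;> simp)
      (fun i j => by fin_cases i <;> fin_cases j <;> simp) (by simp) (by simp)
  obtain h | h : q - (s1 ^ 2 + s2 ^ 2) = 0 ∨ q - (s1 ^ 2 + s2 ^ 2) = 1 := by omega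
  · left; rw [h, Int.cast_zero, KM_diag0]; exact refl1 _
  · right; left; rw [h, Int.cast_one, KM_diag1]; exact refl1 _

theorem good_two : Good (KM 2 1 2) := by
  right; right
  refine iso_of 1 1 (fun i j => by fin_cases i <;> fin_cases j <;> simp)
      (fun i j => by fin_cases i <;> fin_cases j <;> simp) (by simp) ?_
  simp [KM]

theorem parity_key (a1 a2 b1 b2 c1 c2 d1 d2 : ℤ)
    (h1 : a1 ^ 2 + a2 ^ 2 + c1 ^ 2 + c2 ^ 2 = 2) (h2 : b1 ^ 2 + b2 ^ 2 + d1 ^ 2 + d2 ^ 2 = 2)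
    (h3 : a1 * b1 + a2 * b2 + c1 * d1 + c2 * d2 = 1)
    (h4 : a1 * b2 - a2 * b1 + c1 * d2 - c2 * d1 = 0) : False := by
  have key : ∀ a1 a2 b1 b2 c1 c2 d1 d2 : ZMod 2,
    a1 ^ 2 + a2 ^ 2 + c1 ^ 2 + c2 ^ 2 = 0 → b1 ^ 2 + b2 ^ 2 + d1 ^ 2 + d2 ^ 2 = 0 →
    a1 * b1 + a2 * b2 + c1 * d1 + c2 * d2 = 1 →
    a1 * b2 - a2 * b1 + c1 * d2 - c2 * d1 = 0 → False := by decide +kernel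
  have z2 : ((2 : ℤ) : ZMod 2) = 0 := rfl
  refine key a1 a2 b1 b2 c1 c2 d1 d2 ?_ ?_ ?_ ?_
  · rw [← z2, ← h1]; push_cast; rfl
  · rw [← z2, ← h2]; push_cast; rfl
  · rw [← Int.cast_one, ← h3]; push_cast; rfl
  · rw [← Int.cast_zero, ← h4]; push_cast; rfl

theorem zero_of_four {a b c d : ℤ} (h : a ^ 2 + b ^ 2 + c ^ 2 + d ^ 2 = 0) :
    a = 0 ∧ b = 0 ∧ c = 0 ∧ d = 0 := by
  refine ⟨?_, ?_, ?_, ?_⟩ <;> apply pow_eq_zero_iff (two_ne_zero) |>.1 <;> nlinarith [sq_nonneg a, sq_nonneg b, sq_nonneg c, sq_nonneg d]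

theorem KM_psd {p q s1 s2 : ℤ} (h : (KM p ((s1 : ℂ) + s2 * Complex.I) q).PosSemidef) :
    0 ≤ p ∧ 0 ≤ q ∧ s1 ^ 2 + s2 ^ 2 ≤ p * q := by
  have hp := h.diag_nonneg (i := 2)
  have hq := h.diag_nonneg (i := 3)
  have hd := h.det_nonneg
  have e : (KM p ((s1 : ℂ) + s2 * Complex.I) q).det = ((p * q - (s1 ^ 2 + s2 ^ 2) : ℤ) : ℂ) := by
    simp [KM, Matrix.det_succ_row_zero, Fin.sum_univ_succ, Fin.succAbove]
    linear_combination (s2 ^ 2 : ℂ) * Complex.I_mul_I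
  rw [e] at hd
  simp only [KM] at hp hq
  simp at hp hq
  have hd' : (0 : ℤ) ≤ p * q - (s1 ^ 2 + s2 ^ 2) := by exact_mod_cast hd
  exact ⟨by exact_mod_cast hp, by exact_mod_cast hq, by linarith⟩

theorem part_one (a b c d : ℂ) (ha : a ∈ ringO 1) (hb : b ∈ ringO 1) (hc : c ∈ ringO 1)
    (hd : d ∈ ringO 1)
    (h : (!![(1 : ℂ), 0, a, b; 0, 1, c, d;
          (starRingEnd ℂ) a, (starRingEnd ℂ) c, 2, 1;
          (starRingEnd ℂ) b, (starRingEnd ℂ) d, 1, 2]).PosSemidef) :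
    Good !![(1 : ℂ), 0, a, b; 0, 1, c, d;
          (starRingEnd ℂ) a, (starRingEnd ℂ) c, 2, 1;
          (starRingEnd ℂ) b, (starRingEnd ℂ) d, 1, 2] := by
  have hps := h.mul_mul_conjTranspose_same (UM (-(starRingEnd ℂ) a) (-(starRingEnd ℂ) b)
    (-(starRingEnd ℂ) c) (-(starRingEnd ℂ) d))
  rw [← schur_eq] at hps
  refine good_of (iso_of _ _
    (UM_gi (neg_mem (gi_conj ha)) (neg_mem (gi_conj hb)) (neg_mem (gi_conj hc))
      (neg_mem (gi_conj hd)))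
    (UM_gi (gi_conj ha) (gi_conj hb) (gi_conj hc) (gi_conj hd)) (UM_inv _ _ _ _)
    (schur_eq a b c d)) ?_
  clear h
  obtain ⟨a1, a2, rfl⟩ := gi_ex ha
  obtain ⟨b1, b2, rfl⟩ := gi_ex hb
  obtain ⟨c1, c2, rfl⟩ := gi_ex hc
  obtain ⟨d1, d2, rfl⟩ := gi_ex hd
  clear ha hb hc hd
  have eN : ∀ x1 x2 y1 y2 : ℤ, (2 : ℂ) - (starRingEnd ℂ) ((x1 : ℂ) + x2 * Complex.I) *
      ((x1 : ℂ) + x2 * Complex.I) - (starRingEnd ℂ) ((y1 : ℂ) + y2 * Complex.I) *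
      ((y1 : ℂ) + y2 * Complex.I) = ((2 - (x1 ^ 2 + x2 ^ 2 + y1 ^ 2 + y2 ^ 2) : ℤ) : ℂ) := by
    intro x1 x2 y1 y2
    simp
    linear_combination (x2 ^ 2 + y2 ^ 2 : ℂ) * Complex.I_mul_I
  have eS : (1 : ℂ) - (starRingEnd ℂ) ((a1 : ℂ) + a2 * Complex.I) *
      ((b1 : ℂ) + b2 * Complex.I) - (starRingEnd ℂ) ((c1 : ℂ) + c2 * Complex.I) *
      ((d1 : ℂ) + d2 * Complex.I) =
      ((1 - (a1 * b1 + a2 * b2 + c1 * d1 + c2 * d2) : ℤ) : ℂ) +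
      ((-(a1 * b2 - a2 * b1 + c1 * d2 - c2 * d1) : ℤ) : ℂ) * Complex.I := by
    simp
    linear_combination (a2 * b2 + c2 * d2 : ℂ) * Complex.I_mul_I
  rw [eN, eN, eS] at hps ⊢
  have hA : 0 ≤ a1 ^ 2 + a2 ^ 2 + c1 ^ 2 + c2 ^ 2 := by positivity
  have hB : 0 ≤ b1 ^ 2 + b2 ^ 2 + d1 ^ 2 + d2 ^ 2 := by positivity
  have hAz : a1 ^ 2 + a2 ^ 2 + c1 ^ 2 + c2 ^ 2 = 0 →
      1 - (a1 * b1 + a2 * b2 + c1 * d1 + c2 * d2) = 1 ∧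
      -(a1 * b2 - a2 * b1 + c1 * d2 - c2 * d1) = 0 := by
    intro h
    obtain ⟨rfl, rfl, rfl, rfl⟩ := zero_of_four h
    simp
  have hBz : b1 ^ 2 + b2 ^ 2 + d1 ^ 2 + d2 ^ 2 = 0 →
      1 - (a1 * b1 + a2 * b2 + c1 * d1 + c2 * d2) = 1 ∧
      -(a1 * b2 - a2 * b1 + c1 * d2 - c2 * d1) = 0 := by
    intro h
    obtain ⟨rfl, rfl, rfl, rfl⟩ := zero_of_four h
    simp
  have hpar : ¬ (a1 ^ 2 + a2 ^ 2 + c1 ^ 2 + c2 ^ 2 = 2 ∧ b1 ^ 2 + b2 ^ 2 + d1 ^ 2 + d2 ^ 2 = 2 ∧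
      1 - (a1 * b1 + a2 * b2 + c1 * d1 + c2 * d2) = 0 ∧
      -(a1 * b2 - a2 * b1 + c1 * d2 - c2 * d1) = 0) := by
    rintro ⟨h1, h2, h3, h4⟩
    exact parity_key _ _ _ _ _ _ _ _ h1 h2 (by linarith) (by linarith)
  generalize a1 ^ 2 + a2 ^ 2 + c1 ^ 2 + c2 ^ 2 = A at *
  generalize b1 ^ 2 + b2 ^ 2 + d1 ^ 2 + d2 ^ 2 = B at *
  generalize 1 - (a1 * b1 + a2 * b2 + c1 * d1 + c2 * d2) = s at *
  generalize -(a1 * b2 - a2 * b1 + c1 * d2 - c2 * d1) = t at *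
  obtain ⟨hp, hq, hpq⟩ := KM_psd hps
  clear hps eN eS
  have hsw : (starRingEnd ℂ) ((s : ℂ) + t * Complex.I) = (s : ℂ) + (-t : ℤ) * Complex.I := by
    simp
  have hA2 : A ≤ 2 := by linarith
  have hB2 : B ≤ 2 := by linarith
  by_cases hA1 : A = 1
  · subst hA1
    norm_num only [Int.cast_one]
    refine good_one s t (2 - B) (by linarith) ?_
    by_cases h : B = 0
    · obtain ⟨rfl, rfl⟩ := hBz h
      omega
    · have : 0 ≤ s ^ 2 + t ^ 2 := by positivity
      omega
  by_cases hB1 : B = 1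
  · subst hB1
    refine good_of (KM_swap _ _ _) ?_
    rw [hsw]
    norm_num only [Int.cast_one]
    refine good_one s (-t) (2 - A) (by linarith [neg_sq t]) ?_
    by_cases h : A = 0
    · obtain ⟨rfl, rfl⟩ := hAz h
      norm_num; omega
    · have : 0 ≤ s ^ 2 + (-t) ^ 2 := by positivity
      omega
  obtain h | h : A = 0 ∨ A = 2 := by omega
  · subst h
    obtain ⟨rfl, rfl⟩ := hAz rfl
    obtain h | h : B = 0 ∨ B = 2 := by omega
    · subst h
      simpa using good_two
    · subst h
      norm_num at hpq
  · subst h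
    obtain h | h : B = 0 ∨ B = 2 := by omega
    · subst h
      obtain ⟨rfl, rfl⟩ := hBz rfl
      norm_num at hpq
    · subst h
      exact absurd ⟨rfl, rfl, by nlinarith [sq_nonneg t], by nlinarith [sq_nonneg s]⟩ hpar

theorem rep_three : Represents (Matrix.diagonal ![(1 : ℂ), 1, 1, 0]) (1 : Matrix (Fin 3) (Fin 3) ℂ)
    ∧ Represents (1 : Matrix (Fin 4) (Fin 4) ℂ) (1 : Matrix (Fin 3) (Fin 3) ℂ) := by
  have hX : ∀ i j, (!![1, 0, 0, 0; 0, 1, 0, 0; 0, 0, 1, 0] :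
      Matrix (Fin 3) (Fin 4) ℂ) i j ∈ ringO 1 := by
    intro i j
    fin_cases i <;> fin_cases j <;> simp
  refine ⟨⟨_, hX, ?_⟩, ⟨_, hX, ?_⟩⟩
  · ext i j
    fin_cases i <;> fin_cases j <;> simp [Matrix.mul_apply, Matrix.vecMul_diagonal, Fin.sum_univ_four]
  · ext i j
    fin_cases i <;> fin_cases j <;> simp [Matrix.mul_apply, Fin.sum_univ_four]

theorem part_two (d : ℕ) (P : Matrix (Fin d) (Fin d) ℂ)
    (hP : ∀ i j, P i j ∈ ringO 1) (hps : P.PosSemidef)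
    (h1 : Represents P (1 : Matrix (Fin 2) (Fin 2) ℂ))
    (h2 : Represents P !![(2 : ℂ), 1; 1, 2]) :
    Represents P (1 : Matrix (Fin 3) (Fin 3) ℂ) ∨
    Represents P !![(1 : ℂ), 0, 0, 0; 0, 1, 0, 0; 0, 0, 2, 1; 0, 0, 1, 2] := by
  obtain ⟨X, hX, eX⟩ := h1
  obtain ⟨Y, hY, eY⟩ := h2
  let Z : Matrix (Fin 4) (Fin d) ℂ := ![X 0, X 1, Y 0, Y 1]
  have hZ : ∀ i j, Z i j ∈ ringO 1 := by
    intro i j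
    fin_cases i
    · exact hX 0 j
    · exact hX 1 j
    · exact hY 0 j
    · exact hY 1 j
  have hA := gi_matmul (gi_matmul hX hP) (gi_ct hY)
  have hYX : Y * P * Xᴴ = (X * P * Yᴴ)ᴴ := by
    simp [Matrix.conjTranspose_mul, hps.1.eq, Matrix.mul_assoc]
  have eq : !![(1 : ℂ), 0, (X * P * Yᴴ) 0 0, (X * P * Yᴴ) 0 1;
      0, 1, (X * P * Yᴴ) 1 0, (X * P * Yᴴ) 1 1;
      (starRingEnd ℂ) ((X * P * Yᴴ) 0 0), (starRingEnd ℂ) ((X * P * Yᴴ) 1 0), 2, 1;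
      (starRingEnd ℂ) ((X * P * Yᴴ) 0 1), (starRingEnd ℂ) ((X * P * Yᴴ) 1 1), 1, 2]
      = Z * P * Zᴴ := by
    have x := fun i j => congrFun (congrFun eX i) j
    have y := fun i j => congrFun (congrFun eY i) j
    have z := fun i j => congrFun (congrFun hYX i) j
    ext i j
    fin_cases i <;> fin_cases j
    · exact x 0 0
    · exact x 0 1
    · rfl
    · rfl
    · exact x 1 0
    · exact x 1 1
    · rfl
    · rfl
    · exact (z 0 0).symm
    · exact (z 0 1).symm
    · exact y 0 0
    · exact y 0 1
    · exact (z 1 0).symm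
    · exact (z 1 1).symm
    · exact y 1 0
    · exact y 1 1
  have hM := part_one _ _ _ _ (hA 0 0) (hA 0 1) (hA 1 0) (hA 1 1)
    (by rw [eq]; exact hps.mul_mul_conjTranspose_same Z)
  have hr : Represents P _ := ⟨Z, hZ, eq⟩
  rcases hM with h | h | h
  · exact Or.inl (rep_trans (rep_trans hr h.1) rep_three.1)
  · exact Or.inl (rep_trans (rep_trans hr h.1) rep_three.2)
  · exact Or.inr (rep_trans hr h.1)

theorem escalation_quaternary_gaussian :
    -- every positive semidefinite matrix of the given shape is isometric to
    -- ⟨1,1,1,0⟩, ⟨1,1,1,1⟩ or ⟨1,1⟩ ⊥ [[2,1],[1,2]]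
    (∀ a b c d : ℂ, a ∈ ringO 1 → b ∈ ringO 1 → c ∈ ringO 1 → d ∈ ringO 1 →
      (!![(1 : ℂ), 0, a, b; 0, 1, c, d;
          (starRingEnd ℂ) a, (starRingEnd ℂ) c, 2, 1;
          (starRingEnd ℂ) b, (starRingEnd ℂ) d, 1, 2]).PosSemidef →
      (Isometric' !![(1 : ℂ), 0, a, b; 0, 1, c, d;
          (starRingEnd ℂ) a, (starRingEnd ℂ) c, 2, 1;
          (starRingEnd ℂ) b, (starRingEnd ℂ) d, 1, 2]
          (Matrix.diagonal ![(1 : ℂ), 1, 1, 0]) ∨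
       Isometric' !![(1 : ℂ), 0, a, b; 0, 1, c, d;
          (starRingEnd ℂ) a, (starRingEnd ℂ) c, 2, 1;
          (starRingEnd ℂ) b, (starRingEnd ℂ) d, 1, 2]
          (1 : Matrix (Fin 4) (Fin 4) ℂ) ∨
       Isometric' !![(1 : ℂ), 0, a, b; 0, 1, c, d;
          (starRingEnd ℂ) a, (starRingEnd ℂ) c, 2, 1;
          (starRingEnd ℂ) b, (starRingEnd ℂ) d, 1, 2]
          !![(1 : ℂ), 0, 0, 0; 0, 1, 0, 0; 0, 0, 2, 1; 0, 0, 1, 2])) ∧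
    -- hence any lattice representing ⟨1,1⟩ and [[2,1],[1,2]] contains a sublattice
    -- isometric to ⟨1,1,1⟩ or to ⟨1,1⟩ ⊥ [[2,1],[1,2]]
    (∀ (d : ℕ) (P : Matrix (Fin d) (Fin d) ℂ),
      (∀ i j, P i j ∈ ringO 1) → P.PosSemidef →
      Represents P (1 : Matrix (Fin 2) (Fin 2) ℂ) →
      Represents P !![(2 : ℂ), 1; 1, 2] →
      (Represents P (1 : Matrix (Fin 3) (Fin 3) ℂ) ∨
       Represents P !![(1 : ℂ), 0, 0, 0; 0, 1, 0, 0; 0, 0, 2, 1; 0, 0, 1, 2])) := by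
  exact ⟨part_one, part_two⟩
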